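/- For every n ≥ 1, the kernel of the Ā-module homomorphism πₙ^∞: Āⁿ → M(∞)ₙ sending the standard basis vector eᵢ to uᵢ (the projective cover of M(∞)ₙ) is isomorphic as an Ā-module to M(∞)ₙ. In particular the first syzygy of M(∞)ₙ over Ā is M(∞)ₙ itself. -/

import Mathlib

open LinearMap TensorProduct

noncomputable section

namespace HellerKronecker

variable (R : Type) [CommRing R]

/-! ### Coordinate functionals on `Fin n → Fin 4 → R` (the underlying module of `Aⁿ`,
`Zₙ^λ` and `Zₙ^∞`, in their standard `𝒪`-bases). -/

/-- The `(i,j)`-coordinate functional. -/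
def ent (n : ℕ) (i : Fin n) (j : Fin 4) : (Fin n → Fin 4 → R) →ₗ[R] R :=
  (LinearMap.proj j : (Fin 4 → R) →ₗ[R] R).comp
    (LinearMap.proj i : (Fin n → Fin 4 → R) →ₗ[R] (Fin 4 → R))

/-- The `(i+1,j)`-coordinate functional (zero at the boundary). -/
def entSucc (n : ℕ) (i : Fin n) (j : Fin 4) : (Fin n → Fin 4 → R) →ₗ[R] R :=
  if h : i.val + 1 < n then ent R n ⟨i.val + 1, h⟩ j else 0

/-- The `(i-1,j)`-coordinate functional (zero at the boundary). -/
def entPred (n : ℕ) (i : Fin n) (j : Fin 4) : (Fin n → Fin 4 → R) →ₗ[R] R :=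
  if 0 < i.val then ent R n ⟨i.val - 1, lt_of_le_of_lt (Nat.sub_le _ _) i.isLt⟩ j else 0

/-- The standard basis vector with a `1` in position `(i,j)`. -/
def bas (n : ℕ) (i : Fin n) (j : Fin 4) : Fin n → Fin 4 → R :=
  Pi.single i (Pi.single j 1)

/-- The action of `X` on `Aⁿ = (𝒪[X,Y]/(X²,Y²))ⁿ` in the basis `eᵢ, Xeᵢ, Yeᵢ, XYeᵢ`.
This is also the action of `X` on the Heller lattice `Zₙ^λ` in the basis `a_{i,j}`. -/
def opAX (n : ℕ) : (Fin n → Fin 4 → R) →ₗ[R] (Fin n → Fin 4 → R) :=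
  LinearMap.pi fun i => LinearMap.pi fun j => ![0, ent R n i 0, 0, ent R n i 2] j

/-- The action of `Y` on `Aⁿ` in the basis `eᵢ, Xeᵢ, Yeᵢ, XYeᵢ`. -/
def opAY (n : ℕ) : (Fin n → Fin 4 → R) →ₗ[R] (Fin n → Fin 4 → R) :=
  LinearMap.pi fun i => LinearMap.pi fun j => ![0, 0, ent R n i 0, ent R n i 1] j

/-- The action of `X` on the Heller lattice `Zₙ^λ` in the `𝒪`-basis
`a_{i,1} = εeᵢ, a_{i,2} = εXeᵢ, a_{i,3} = Yeᵢ − λXeᵢ − Xe_{i−1}, a_{i,4} = XYeᵢ`. -/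
def opZlX (n : ℕ) : (Fin n → Fin 4 → R) →ₗ[R] (Fin n → Fin 4 → R) := opAX R n

/-- The action of `Y` on the Heller lattice `Zₙ^λ` (uniformizer `e`, parameter `l`). -/
def opZlY (n : ℕ) (e l : R) : (Fin n → Fin 4 → R) →ₗ[R] (Fin n → Fin 4 → R) :=
  LinearMap.pi fun i => LinearMap.pi fun j =>
    ![0, l • ent R n i 0 + entSucc R n i 0, e • ent R n i 0,
      e • ent R n i 1 - l • ent R n i 2 - entSucc R n i 2] j

/-- The action of `X` on the Heller lattice `Zₙ^∞` in the `𝒪`-basis `b_{i,j}`. -/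
def opZiX (n : ℕ) (e : R) : (Fin n → Fin 4 → R) →ₗ[R] (Fin n → Fin 4 → R) :=
  LinearMap.pi fun i => LinearMap.pi fun j =>
    ![0, (if i.val = 0 then e else 1) • ent R n i 0, 0,
      (if i.val + 1 = n then e else 1) • ent R n i 2] j

/-- The action of `Y` on the Heller lattice `Zₙ^∞` in the `𝒪`-basis `b_{i,j}`. -/
def opZiY (n : ℕ) (e : R) : (Fin n → Fin 4 → R) →ₗ[R] (Fin n → Fin 4 → R) :=
  LinearMap.pi fun i => LinearMap.pi fun j =>
    ![0, entPred R n i 0, (if i.val + 1 = n then (1 : R) else e) • ent R n i 0,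
      (if i.val = 0 then (1 : R) else e) • ent R n i 1 - entPred R n i 2] j

/-! ### The modules `M(λ)ₙ` and `M(∞)ₙ`, with underlying space `Fin n → Fin 2 → R`
(coordinate `(i,0)` is `u_{i+1}`, coordinate `(i,1)` is `v_{i+1}`). -/

def entm (n : ℕ) (i : Fin n) (j : Fin 2) : (Fin n → Fin 2 → R) →ₗ[R] R :=
  (LinearMap.proj j : (Fin 2 → R) →ₗ[R] R).comp
    (LinearMap.proj i : (Fin n → Fin 2 → R) →ₗ[R] (Fin 2 → R))

def entmSucc (n : ℕ) (i : Fin n) (j : Fin 2) : (Fin n → Fin 2 → R) →ₗ[R] R :=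
  if h : i.val + 1 < n then entm R n ⟨i.val + 1, h⟩ j else 0

/-- The standard basis vector of `M(λ)ₙ`/`M(∞)ₙ`: `(i,0) ↦ uᵢ`, `(i,1) ↦ vᵢ`. -/
def basm (n : ℕ) (i : Fin n) (j : Fin 2) : Fin n → Fin 2 → R :=
  Pi.single i (Pi.single j 1)

/-- `X` on `M(λ)ₙ` : `X·uᵢ = vᵢ`, `X·vᵢ = 0`. -/
def opMlX (n : ℕ) : (Fin n → Fin 2 → R) →ₗ[R] (Fin n → Fin 2 → R) :=
  LinearMap.pi fun i => LinearMap.pi fun j => ![0, entm R n i 0] j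

/-- `Y` on `M(λ)ₙ` : `Y·uᵢ = λvᵢ + v_{i−1}`, `Y·vᵢ = 0`. -/
def opMlY (n : ℕ) (l : R) : (Fin n → Fin 2 → R) →ₗ[R] (Fin n → Fin 2 → R) :=
  LinearMap.pi fun i => LinearMap.pi fun j => ![0, l • entm R n i 0 + entmSucc R n i 0] j

/-- `X` on `M(∞)ₙ` : `X·uᵢ = v_{i−1}`, `X·vᵢ = 0`. -/
def opMiX (n : ℕ) : (Fin n → Fin 2 → R) →ₗ[R] (Fin n → Fin 2 → R) :=
  LinearMap.pi fun i => LinearMap.pi fun j => ![0, entmSucc R n i 0] j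

/-- `Y` on `M(∞)ₙ` : `Y·uᵢ = vᵢ`, `Y·vᵢ = 0`. -/
def opMiY (n : ℕ) : (Fin n → Fin 2 → R) →ₗ[R] (Fin n → Fin 2 → R) :=
  LinearMap.pi fun i => LinearMap.pi fun j => ![0, entm R n i 0] j

/-! ### Projective covers. -/

/-- The projective cover `πₙ^λ : Aⁿ → M(λ)ₙ`, `eᵢ ↦ uᵢ` (extended `A`-linearly,
an element of `Aⁿ` being recorded by its coordinates in the basis `eᵢ, Xeᵢ, Yeᵢ, XYeᵢ`). -/
def projCovMl (n : ℕ) (l : R) : (Fin n → Fin 4 → R) →ₗ[R] (Fin n → Fin 2 → R) :=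
  ∑ k : Fin n, ∑ j : Fin 4,
    (ent R n k j).smulRight
      ((![LinearMap.id, opMlX R n, opMlY R n l, (opMlX R n) ∘ₗ (opMlY R n l)] j) (basm R n k 0))

/-- The projective cover `πₙ^∞ : Aⁿ → M(∞)ₙ`, `eᵢ ↦ uᵢ`. -/
def projCovMi (n : ℕ) : (Fin n → Fin 4 → R) →ₗ[R] (Fin n → Fin 2 → R) :=
  ∑ k : Fin n, ∑ j : Fin 4,
    (ent R n k j).smulRight
      ((![LinearMap.id, opMiX R n, opMiY R n, (opMiX R n) ∘ₗ (opMiY R n)] j) (basm R n k 0))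

/-- The projective cover `π_{n,λ} : A^{2n} → Zₙ^λ`, `e_{2k−1} ↦ a_{k,1}`, `e_{2k} ↦ a_{k,3}`. -/
def projCovZl (n : ℕ) (e l : R) : (Fin (2*n) → Fin 4 → R) →ₗ[R] (Fin n → Fin 4 → R) :=
  ∑ k : Fin n, ∑ j : Fin 4,
    ((ent R (2*n) ⟨2*k.val, by have := k.isLt; omega⟩ j).smulRight
        ((![LinearMap.id, opZlX R n, opZlY R n e l, (opZlX R n) ∘ₗ (opZlY R n e l)] j)
          (bas R n k 0))
     + (ent R (2*n) ⟨2*k.val + 1, by have := k.isLt; omega⟩ j).smulRight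
        ((![LinearMap.id, opZlX R n, opZlY R n e l, (opZlX R n) ∘ₗ (opZlY R n e l)] j)
          (bas R n k 2)))

/-- Images of the standard basis vectors of `A^{2n}` under `π_{n,∞}`:
`e₁ ↦ b_{1,1}`, `e₂ ↦ b_{1,2}`, `e_{2k+1} ↦ b_{k,3}` (`1 ≤ k ≤ n−1`),
`e_{2k} ↦ b_{k,1}` (`2 ≤ k ≤ n`)  (here `s` is the 0-based index of the basis vector). -/
def tgtZi (n : ℕ) (s : Fin (2*n)) : Fin n → Fin 4 → R :=
  if s.val = 0 then bas R n ⟨0, by have := s.isLt; omega⟩ 0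
  else if s.val = 1 then bas R n ⟨0, by have := s.isLt; omega⟩ 1
  else if s.val % 2 = 0 then bas R n ⟨s.val / 2 - 1, by have := s.isLt; omega⟩ 2
  else bas R n ⟨s.val / 2, by have := s.isLt; omega⟩ 0

/-- The projective cover `π_{n,∞} : A^{2n} → Zₙ^∞`. -/
def projCovZi (n : ℕ) (e : R) : (Fin (2*n) → Fin 4 → R) →ₗ[R] (Fin n → Fin 4 → R) :=
  ∑ s : Fin (2*n), ∑ j : Fin 4,
    (ent R (2*n) s j).smulRight
      ((![LinearMap.id, opZiX R n e, opZiY R n e, (opZiX R n e) ∘ₗ (opZiY R n e)] j)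
        (tgtZi R n s))

/-- The endomorphism `Φₙ` of `Zₙ^λ` (resp. `Zₙ^∞`): the unique `A`-endomorphism sending
`a_{n,1} ↦ a_{n,4}` (resp. `b_{n,1} ↦ b_{n,4}`) and `a_{k,1} ↦ 0` for `k < n`. -/
def PhiEnd (n : ℕ) : (Fin n → Fin 4 → R) →ₗ[R] (Fin n → Fin 4 → R) :=
  LinearMap.pi fun i => LinearMap.pi fun j =>
    if i.val + 1 = n ∧ j = 3 then ent R n i 0 else 0

/-- The pull-back lattice `Eₙ^λ = {(x,y) ∈ A^{2n} ⊕ Zₙ^λ ∣ π_{n,λ}(x) = Φₙ^λ(y)}`. -/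
def El (n : ℕ) (e l : R) :
    Submodule R ((Fin (2*n) → Fin 4 → R) × (Fin n → Fin 4 → R)) :=
  LinearMap.ker ((projCovZl R n e l) ∘ₗ (LinearMap.fst R _ _)
    - (PhiEnd R n) ∘ₗ (LinearMap.snd R _ _))

/-- The pull-back lattice `Eₙ^∞ = {(x,y) ∈ A^{2n} ⊕ Zₙ^∞ ∣ π_{n,∞}(x) = Φₙ^∞(y)}`. -/
def Ei (n : ℕ) (e : R) :
    Submodule R ((Fin (2*n) → Fin 4 → R) × (Fin n → Fin 4 → R)) :=
  LinearMap.ker ((projCovZi R n e) ∘ₗ (LinearMap.fst R _ _)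
    - (PhiEnd R n) ∘ₗ (LinearMap.snd R _ _))

end HellerKronecker

/-!
Since `XY` annihilates `M(∞)ₙ`, the kernel of `πₙ^∞` has the `R`-basis
`wᵢ = Xeᵢ - Ye_{i-1}` (with `e₀ = 0`) and `XYeᵢ`. These satisfy `Xwᵢ = -XYe_{i-1}` and
`Ywᵢ = XYeᵢ`, the relations of `M(∞)ₙ` up to a sign, which is absorbed by
`uᵢ ↦ (-1)ⁱwᵢ`, `vᵢ ↦ (-1)ⁱXYeᵢ`.
-/

namespace HellerKronecker

variable {R : Type} [CommRing R] {n : ℕ}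

theorem ent_apply (i : Fin n) (j : Fin 4) (x : Fin n → Fin 4 → R) : ent R n i j x = x i j :=
  rfl

theorem entm_apply (i : Fin n) (j : Fin 2) (m : Fin n → Fin 2 → R) : entm R n i j m = m i j :=
  rfl

theorem entSucc_eq_zero {j : Fin 4} {x : Fin n → Fin 4 → R} (h : ∀ k, x k j = 0) (i : Fin n) :
    entSucc R n i j x = 0 := by
  unfold entSucc
  split_ifs with hi
  · exact h _
  · rfl

theorem entmSucc_eq_zero {j : Fin 2} {m : Fin n → Fin 2 → R} (h : ∀ k, m k j = 0) (i : Fin n) :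
    entmSucc R n i j m = 0 := by
  unfold entmSucc
  split_ifs with hi
  · exact h _
  · rfl

theorem entmSucc_eq_entSucc {j : Fin 2} {j' : Fin 4} {m : Fin n → Fin 2 → R}
    {x : Fin n → Fin 4 → R} (h : ∀ k, m k j = x k j') (i : Fin n) :
    entmSucc R n i j m = entSucc R n i j' x := by
  unfold entmSucc entSucc
  split_ifs with hi
  · exact h _
  · rfl

theorem opMiX_apply (m : Fin n → Fin 2 → R) (i : Fin n) :
    opMiX R n m i = ![0, entmSucc R n i 0 m] := by
  ext j
  fin_cases j <;> rfl

theorem opMiY_apply (m : Fin n → Fin 2 → R) (i : Fin n) : opMiY R n m i = ![0, m i 0] := by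
  ext j
  fin_cases j <;> rfl

theorem opAX_apply (x : Fin n → Fin 4 → R) (i : Fin n) :
    opAX R n x i = ![0, x i 0, 0, x i 2] := by
  ext j
  fin_cases j <;> rfl

theorem opAY_apply (x : Fin n → Fin 4 → R) (i : Fin n) :
    opAY R n x i = ![0, 0, x i 0, x i 1] := by
  ext j
  fin_cases j <;> rfl

theorem entmSucc_opMiX (m : Fin n → Fin 2 → R) (i : Fin n) :
    entmSucc R n i 0 (opMiX R n m) = 0 :=
  entmSucc_eq_zero (fun _ => rfl) i

theorem entmSucc_opMiY (m : Fin n → Fin 2 → R) (i : Fin n) :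
    entmSucc R n i 0 (opMiY R n m) = 0 :=
  entmSucc_eq_zero (fun _ => rfl) i

theorem opMiX_opMiY (m : Fin n → Fin 2 → R) : opMiX R n (opMiY R n m) = 0 := by
  ext i j
  fin_cases j <;> simp [opMiX_apply, entmSucc_opMiY]

theorem sum_smul_basm_zero (a : Fin n → R) :
    ∑ k, a k • basm R n k 0 = fun i => ![a i, 0] := by
  ext i j
  fin_cases j <;> simp [basm, Finset.sum_apply, Pi.single_apply, ite_apply]

theorem projCovMi_eq_add (x : Fin n → Fin 4 → R) :
    projCovMi R n x = (fun i => ![x i 0, 0]) + opMiX R n (fun i => ![x i 1, 0]) +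
      opMiY R n (fun i => ![x i 2, 0]) := by
  simp only [← sum_smul_basm_zero, map_sum, map_smul, ← Finset.sum_add_distrib]
  simp [projCovMi, Fin.sum_univ_four, ent_apply, opMiX_opMiY]

theorem projCovMi_apply (x : Fin n → Fin 4 → R) (i : Fin n) :
    projCovMi R n x i = ![x i 0, entSucc R n i 1 x + x i 2] := by
  have hshift : entmSucc R n i 0 (fun k => ![x k 1, 0]) = entSucc R n i 1 x :=
    entmSucc_eq_entSucc (fun _ => rfl) i
  rw [projCovMi_eq_add]
  simp [opMiX_apply, opMiY_apply, hshift]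

theorem projCovMi_surjective : Function.Surjective (projCovMi R n) := by
  intro m
  refine ⟨fun i => ![m i 0, 0, m i 1, 0], ?_⟩
  ext i j
  rw [projCovMi_apply, entSucc_eq_zero (fun _ => rfl)]
  fin_cases j <;> simp

theorem mem_ker_projCovMi {x : Fin n → Fin 4 → R} :
    x ∈ ker (projCovMi R n) ↔ ∀ i, x i 0 = 0 ∧ x i 2 = -entSucc R n i 1 x := by
  simp [LinearMap.mem_ker, funext_iff, projCovMi_apply, Fin.forall_fin_two,
    add_comm (entSucc R n _ 1 x), add_eq_zero_iff_eq_neg]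

variable (R n) in
/-- The embedding of `M(∞)ₙ` into `Aⁿ` as the kernel of `πₙ^∞`, given by
`uᵢ ↦ (-1)ⁱ(Xeᵢ - Ye_{i-1})` and `vᵢ ↦ (-1)ⁱXYeᵢ`, where `i` starts at `0` and `e_{-1} = 0`. -/
def syzygyEmb : (Fin n → Fin 2 → R) →ₗ[R] (Fin n → Fin 4 → R) :=
  LinearMap.pi fun i => LinearMap.pi fun j =>
    ![0, (-1 : R) ^ i.val • entm R n i 0, (-1 : R) ^ i.val • entmSucc R n i 0,
      (-1 : R) ^ i.val • entm R n i 1] j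

variable (R n) in
/-- The `R`-linear retraction of `syzygyEmb` that reads the coordinates of `uᵢ` and `vᵢ` off
those of `Xeᵢ` and `XYeᵢ`, undoing the sign `(-1)ⁱ`. -/
def syzygyRetr : (Fin n → Fin 4 → R) →ₗ[R] (Fin n → Fin 2 → R) :=
  LinearMap.pi fun i => LinearMap.pi fun j =>
    ![(-1 : R) ^ i.val • ent R n i 1, (-1 : R) ^ i.val • ent R n i 3] j

theorem syzygyEmb_apply (m : Fin n → Fin 2 → R) (i : Fin n) :
    syzygyEmb R n m i = ![0, (-1) ^ i.val * m i 0, (-1) ^ i.val * entmSucc R n i 0 m,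
      (-1) ^ i.val * m i 1] := by
  ext j
  fin_cases j <;> rfl

theorem syzygyRetr_apply (x : Fin n → Fin 4 → R) (i : Fin n) :
    syzygyRetr R n x i = ![(-1) ^ i.val * x i 1, (-1) ^ i.val * x i 3] := by
  ext j
  fin_cases j <;> rfl

theorem entmSucc_syzygyRetr (x : Fin n → Fin 4 → R) (i : Fin n) :
    entmSucc R n i 0 (syzygyRetr R n x) = -((-1) ^ i.val * entSucc R n i 1 x) := by
  unfold entmSucc entSucc
  split_ifs with hi
  · simp [entm_apply, ent_apply, syzygyRetr_apply, pow_succ]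
  · simp

theorem entSucc_syzygyEmb (m : Fin n → Fin 2 → R) (i : Fin n) :
    entSucc R n i 1 (syzygyEmb R n m) = -((-1) ^ i.val * entmSucc R n i 0 m) := by
  unfold entmSucc entSucc
  split_ifs with hi
  · simp [entm_apply, ent_apply, syzygyEmb_apply, pow_succ]
  · simp

theorem neg_one_pow_mul_neg_one_pow_mul {S : Type*} [Monoid S] [HasDistribNeg S] (k : ℕ) (a : S) :
    (-1) ^ k * ((-1) ^ k * a) = a := by
  rw [← mul_assoc, ← pow_add, (Even.add_self k).neg_one_pow, one_mul]

theorem leftInverse_syzygyRetr_syzygyEmb :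
    Function.LeftInverse (syzygyRetr R n) (syzygyEmb R n) := by
  intro m
  ext i j
  fin_cases j <;> simp [syzygyRetr_apply, syzygyEmb_apply, neg_one_pow_mul_neg_one_pow_mul]

theorem syzygyEmb_syzygyRetr {x : Fin n → Fin 4 → R} (hx : x ∈ ker (projCovMi R n)) :
    syzygyEmb R n (syzygyRetr R n x) = x := by
  ext i j
  obtain ⟨hx0, hx2⟩ := mem_ker_projCovMi.mp hx i
  fin_cases j <;>
    simp [syzygyEmb_apply, syzygyRetr_apply, entmSucc_syzygyRetr,
      neg_one_pow_mul_neg_one_pow_mul, hx0, hx2]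

theorem syzygyEmb_mem_ker (m : Fin n → Fin 2 → R) : syzygyEmb R n m ∈ ker (projCovMi R n) := by
  rw [mem_ker_projCovMi]
  intro i
  simp [syzygyEmb_apply, entSucc_syzygyEmb]

theorem range_syzygyEmb : range (syzygyEmb R n) = ker (projCovMi R n) := by
  apply le_antisymm
  · rintro _ ⟨m, rfl⟩
    exact syzygyEmb_mem_ker m
  · exact fun x hx => ⟨syzygyRetr R n x, syzygyEmb_syzygyRetr hx⟩

theorem syzygyEmb_comp_opMiX : syzygyEmb R n ∘ₗ opMiX R n = opAX R n ∘ₗ syzygyEmb R n := by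
  refine LinearMap.ext fun m => funext fun i => ?_
  simp [syzygyEmb_apply, opMiX_apply, opAX_apply, entmSucc_opMiX]

theorem syzygyEmb_comp_opMiY : syzygyEmb R n ∘ₗ opMiY R n = opAY R n ∘ₗ syzygyEmb R n := by
  refine LinearMap.ext fun m => funext fun i => ?_
  simp [syzygyEmb_apply, opMiY_apply, opAY_apply, entmSucc_opMiY]

end HellerKronecker

open HellerKronecker in
theorem statement5_general (R : Type) [CommRing R] (n : ℕ) :
    Function.Surjective (projCovMi R n) ∧
    ∃ ι : (Fin n → Fin 2 → R) →ₗ[R] (Fin n → Fin 4 → R),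
      Function.Injective ι ∧
      ι ∘ₗ opMiX R n = opAX R n ∘ₗ ι ∧
      ι ∘ₗ opMiY R n = opAY R n ∘ₗ ι ∧
      LinearMap.range ι = LinearMap.ker (projCovMi R n) :=
  ⟨projCovMi_surjective, syzygyEmb R n, leftInverse_syzygyRetr_syzygyEmb.injective,
    syzygyEmb_comp_opMiX, syzygyEmb_comp_opMiY, range_syzygyEmb⟩

open HellerKronecker in
/-- Over `Ā = κ[X,Y]/(X²,Y²)`, the kernel of the projective cover
`πₙ^∞ : Āⁿ → M(∞)ₙ`, `eᵢ ↦ uᵢ`, is isomorphic to `M(∞)ₙ` as an `Ā`-module. -/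
theorem statement5 (κ : Type) [Field κ] [IsAlgClosed κ] (n : ℕ) (hn : 1 ≤ n) :
    Function.Surjective (projCovMi κ n) ∧
    ∃ ι : (Fin n → Fin 2 → κ) →ₗ[κ] (Fin n → Fin 4 → κ),
      Function.Injective ι ∧
      ι ∘ₗ opMiX κ n = opAX κ n ∘ₗ ι ∧
      ι ∘ₗ opMiY κ n = opAY κ n ∘ₗ ι ∧
      LinearMap.range ι = LinearMap.ker (projCovMi κ n) :=
  statement5_general κ n
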